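/- Define g̃_i^{(1)} and G̃_i^{(1)} by: g̃_1^{(1)} = 0, G̃_1^{(1)} = B̌_1, g̃_i^{(1)} = F̃_i·G̃_{i−1}^{(1)} and G̃_i^{(1)} = g̃_i^{(1)} + B̌_i for i = 2,…,N. For M ≥ 2 define g̃_i^{(M)} by g̃_1^{(M)} = 0 and g̃_i^{(M)} = F̃_i·g̃_{i−1}^{(M)} + G̃_{i−1}^{(1)}·g̃_i^{(M−1)} + Σ_{k=2}^{M−1} g̃_{i−1}^{(k)}·g̃_i^{(M−k)} for i = 2,…,N, and define G̃_i^{(M)} = M·g̃_i^{(M)} + G̃_i^{(1)}·G̃_i^{(M−1)} + Σ_{k=2}^{M−1} g̃_i^{(k)}·G̃_i^{(M−k)} for i = 1,…,N. Then for every positive integer M, J_M(B) = Σ_{i=1}^{N} G̃_i^{(M)}. -/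

import Mathlib

open Matrix

/-! Put `A = (BᵀB)⁻¹` and `h_i = G̃_i^{(1)} X + ∑_{M ≥ 2} g̃_i^{(M)} X^M`. As an identity of
power series, the recursion for `g̃` says that `q_i (1 - h_i)` are the pivots of `BᵀB - X`, so
`det (1 - X A) = ∏ i, (1 - h_i)`. The recursion for `G̃` says that
`∑_{M ≥ 1} G̃_i^{(M)} X^M` is `-X` times the logarithmic derivative of `1 - h_i`, while by Jacobi's
formula `∑_{M ≥ 1} Tr (A ^ M) X^M` is `-X` times the logarithmic derivative of `det (1 - X A)`.
-/

section

open PowerSeries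

section Jacobi

variable {R A : Type*} [CommSemiring R]

section CommSemiring

variable [CommSemiring A] [Algebra R A] (D : Derivation R A A)

theorem derivation_prod {ι : Type*} [DecidableEq ι] (s : Finset ι) (f : ι → A) :
    D (∏ i ∈ s, f i) = ∑ i ∈ s, (∏ j ∈ s.erase i, f j) * D (f i) := by
  induction s using Finset.induction_on with
  | empty => simp
  | insert a s ha ih =>
    have hprod : ∀ i ∈ s, ∏ j ∈ (insert a s).erase i, f j = f a * ∏ j ∈ s.erase i, f j := by
      intro i hi
      have hne : a ≠ i := fun h => ha (h ▸ hi)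
      rw [Finset.erase_insert_of_ne hne,
        Finset.prod_insert (fun h => ha (Finset.mem_of_mem_erase h))]
    have hsum : ∑ i ∈ s, (∏ j ∈ (insert a s).erase i, f j) * D (f i) =
        f a * ∑ i ∈ s, (∏ j ∈ s.erase i, f j) * D (f i) := by
      rw [Finset.mul_sum]
      exact Finset.sum_congr rfl fun i hi => by rw [hprod i hi, mul_assoc]
    rw [Finset.prod_insert ha, D.leibniz, ih, Finset.sum_insert ha, Finset.erase_insert ha, hsum,
      smul_eq_mul, smul_eq_mul, add_comm]

theorem derivation_prod_of_eq_mul {ι : Type*} {s : Finset ι} {f g : ι → A}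
    (h : ∀ i ∈ s, D (f i) = f i * g i) : D (∏ i ∈ s, f i) = (∏ i ∈ s, f i) * ∑ i ∈ s, g i := by
  classical
  rw [derivation_prod, Finset.mul_sum]
  refine Finset.sum_congr rfl fun i hi => ?_
  rw [h i hi, ← mul_assoc, Finset.prod_erase_mul _ _ hi]

end CommSemiring

variable [CommRing A] [Algebra R A] (D : Derivation R A A)

theorem derivation_det {n : Type*} [Fintype n] [DecidableEq n] (M : Matrix n n A) :
    D M.det = (M.adjugate * M.map D).trace := by
  have hcol (i : n) (σ : Equiv.Perm n) :
      (∏ j ∈ Finset.univ.erase i, M (σ j) j) * D (M (σ i) i) =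
        ∏ j, M.updateCol i (fun k => D (M k i)) (σ j) j := by
    rw [← Finset.prod_erase_mul _ _ (Finset.mem_univ i), updateCol_self]
    congr 1
    exact Finset.prod_congr rfl fun j hj => by rw [updateCol_ne (Finset.ne_of_mem_erase hj)]
  calc D M.det
      = ∑ σ : Equiv.Perm n, ∑ i, σ.sign • ∏ j, M.updateCol i (fun k => D (M k i)) (σ j) j := by
        simp only [det_apply, map_sum, Units.smul_def, map_zsmul, derivation_prod,
          hcol, Finset.smul_sum]
    _ = ∑ i, (M.updateCol i fun k => D (M k i)).det := by
        rw [Finset.sum_comm]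
        simp only [det_apply]
    _ = ∑ i, (M.adjugate *ᵥ fun k => D (M k i)) i := by
        simp only [← cramer_apply, cramer_eq_adjugate_mulVec]
    _ = (M.adjugate * M.map D).trace := rfl

end Jacobi

section TraceSeries

variable {R : Type*} {n : Type*} [Fintype n] [DecidableEq n]

/-- The resolvent series `∑ A ^ m X ^ m`, the inverse of `1 - X A`, stored as a matrix of power
series rather than as a power series with matrix coefficients. -/
noncomputable def powSeries [Semiring R] (A : Matrix n n R) : Matrix n n R⟦X⟧ :=
  .of fun i j => .mk fun m => (A ^ m) i j

theorem powSeries_mul_map_C [Semiring R] (A : Matrix n n R) :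
    powSeries A * A.map C = .of fun i j => .mk fun m => (A ^ (m + 1)) i j := by
  ext i j m
  simp only [powSeries, mul_apply, of_apply, map_apply, map_sum, coeff_mul_C, coeff_mk, pow_succ]

variable [CommRing R]

theorem powSeries_mul_one_sub_X_smul (A : Matrix n n R) :
    powSeries A * (1 - (X : R⟦X⟧) • A.map C) = 1 := by
  rw [mul_sub, mul_one, mul_smul_comm, powSeries_mul_map_C, sub_eq_iff_eq_add]
  ext i j m
  by_cases h : i = j <;> cases m <;> simp [powSeries, one_apply, h, coeff_succ_X_mul, coeff_one]

theorem derivative_det_one_sub_X_smul (A : Matrix n n R) :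
    d⁄dX R (1 - (X : R⟦X⟧) • A.map C).det =
      -(1 - (X : R⟦X⟧) • A.map C).det * .mk fun m => (A ^ (m + 1)).trace := by
  set P : Matrix n n R⟦X⟧ := 1 - (X : R⟦X⟧) • A.map C
  have hadj : P.adjugate = P.det • powSeries A := by
    rw [← one_mul P.adjugate, ← powSeries_mul_one_sub_X_smul A, mul_assoc, mul_adjugate,
      mul_smul_comm, mul_one]
  have hder : P.map (d⁄dX R) = -A.map C := by
    ext1 i j
    by_cases h : i = j <;> simp [P, h]
  have htrace : (powSeries A * A.map C).trace = .mk fun m => (A ^ (m + 1)).trace := by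
    rw [powSeries_mul_map_C]
    ext m
    simp [trace]
  rw [derivation_det, hadj, hder, mul_neg, smul_mul_assoc, trace_neg, trace_smul, htrace,
    smul_eq_mul, neg_mul]

theorem det_map_C_sub_X_smul_one {T : Matrix n n R} (hT : IsUnit T.det) :
    (T.map C - (X : R⟦X⟧) • 1).det = C T.det * (1 - (X : R⟦X⟧) • T⁻¹.map C).det := by
  have hinv : T.map C * T⁻¹.map C = (1 : Matrix n n R⟦X⟧) := by
    rw [← Matrix.map_mul, mul_nonsing_inv T hT, Matrix.map_one _ (map_zero C) (map_one C)]
  rw [← C.mapMatrix_apply T, RingHom.map_det, ← det_mul, mul_sub, mul_one, mul_smul_comm,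
    C.mapMatrix_apply, hinv]

end TraceSeries

section Bidiagonal

variable {R : Type*}

/-- The upper bidiagonal matrix with diagonal `d 0, d 1, …` and superdiagonal `s 0, s 1, …`. Both
sequences are indexed by `ℕ`, and only the first `N` and `N - 1` terms matter. -/
def upperBidiagonal [Zero R] (N : ℕ) (d s : ℕ → R) : Matrix (Fin N) (Fin N) R :=
  .of fun i j => if (j : ℕ) = i then d i else if (j : ℕ) = i + 1 then s i else 0

theorem upperBidiagonal_map_C [Semiring R] (N : ℕ) (d s : ℕ → R) :
    (upperBidiagonal N d s).map (C (R := R)) =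
      upperBidiagonal N (fun i => C (d i)) (fun i => C (s i)) := by
  ext1 i j
  simp only [upperBidiagonal, map_apply, of_apply, apply_ite (C (R := R)), map_zero]

variable {N : ℕ}

theorem transpose_upperBidiagonal_mul_apply_zero [NonUnitalNonAssocSemiring R] (d s : ℕ → R)
    (M : Matrix (Fin N) (Fin N) R) (h : 0 < N) (j : Fin N) :
    ((upperBidiagonal N d s)ᵀ * M) ⟨0, h⟩ j = d 0 * M ⟨0, h⟩ j := by
  rw [mul_apply, Finset.sum_eq_single ⟨0, h⟩]
  · simp [upperBidiagonal]
  · intro k _ hk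
    have : (0 : ℕ) ≠ k := fun h0 => hk (Fin.ext h0.symm)
    simp [upperBidiagonal, this]
  · simp

theorem transpose_upperBidiagonal_mul_apply_succ [NonUnitalNonAssocSemiring R] (d s : ℕ → R)
    (M : Matrix (Fin N) (Fin N) R) {i : ℕ} (h : i + 1 < N) (j : Fin N) :
    ((upperBidiagonal N d s)ᵀ * M) ⟨i + 1, h⟩ j =
      d (i + 1) * M ⟨i + 1, h⟩ j + s i * M ⟨i, by lia⟩ j := by
  have hne : (⟨i + 1, h⟩ : Fin N) ≠ ⟨i, by lia⟩ := by simp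
  rw [mul_apply, Finset.sum_eq_add_of_mem _ _ (Finset.mem_univ _) (Finset.mem_univ _) hne]
  · simp [upperBidiagonal]
  · rintro k - ⟨hk, hk'⟩
    have h1 : i + 1 ≠ k := fun h0 => hk (Fin.ext h0.symm)
    have h2 : i ≠ k := fun h0 => hk' (Fin.ext h0.symm)
    simp [upperBidiagonal, h1, h2]

variable [CommRing R]

/-- An `LU` factorization of the shifted matrix: its pivots are `a i * c i * p i`, and `v` plays the
role of `p⁻¹`. -/
theorem transpose_mul_upperBidiagonal_sub_smul_one {a b c d p v : ℕ → R} {x : R}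
    (hv : ∀ i, i + 1 < N → p i * v i = 1)
    (hzero : 0 < N → a 0 * c 0 * p 0 = a 0 * c 0 - x)
    (hsucc : ∀ i, i + 1 < N →
      a (i + 1) * c (i + 1) * p (i + 1) + b i * d i * v i =
        a (i + 1) * c (i + 1) + b i * d i - x) :
    (upperBidiagonal N a b)ᵀ * upperBidiagonal N c d - x • 1 =
      (upperBidiagonal N a (b * v))ᵀ * upperBidiagonal N (c * p) d := by
  ext1 ⟨i, hi⟩ ⟨j, hj⟩
  rw [Matrix.sub_apply, Matrix.smul_apply, smul_eq_mul, one_apply]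
  cases i with
  | zero =>
    specialize hzero hi
    rw [transpose_upperBidiagonal_mul_apply_zero, transpose_upperBidiagonal_mul_apply_zero]
    simp only [upperBidiagonal, of_apply, Fin.mk.injEq, Pi.mul_apply]
    clear hv hsucc
    grind
  | succ i =>
    specialize hv i hi
    specialize hsucc i hi
    rw [transpose_upperBidiagonal_mul_apply_succ, transpose_upperBidiagonal_mul_apply_succ]
    simp only [upperBidiagonal, of_apply, Fin.mk.injEq, Pi.mul_apply]
    clear hzero
    grind

theorem det_upperBidiagonal (d s : ℕ → R) :
    (upperBidiagonal N d s).det = ∏ i ∈ Finset.range N, d i := by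
  have htri : (upperBidiagonal N d s).BlockTriangular id := by
    intro i j (hij : j < i)
    simp only [upperBidiagonal, of_apply]
    rw [if_neg (by lia), if_neg (by lia)]
  rw [det_of_isUpperTriangular htri, ← Fin.prod_univ_eq_prod_range]
  simp [upperBidiagonal]

theorem det_transpose_mul_upperBidiagonal (a b c d : ℕ → R) :
    ((upperBidiagonal N a b)ᵀ * upperBidiagonal N c d).det =
      ∏ i ∈ Finset.range N, a i * c i := by
  rw [det_mul, det_transpose, det_upperBidiagonal, det_upperBidiagonal, Finset.prod_mul_distrib]

end Bidiagonal

section GenSeries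

variable {R : Type*}

/-- The generating function `∑_{n ≥ 1} a n X ^ n`. The value `a 0` is ignored since the recursions
start at index `1`. -/
noncomputable def genSeries [Semiring R] (a : ℕ → R) : R⟦X⟧ :=
  X * .mk fun n => a (n + 1)

section Semiring

variable [Semiring R]

theorem constantCoeff_genSeries (a : ℕ → R) : constantCoeff (genSeries a) = 0 := by
  simp [genSeries]

theorem coeff_succ_genSeries (a : ℕ → R) (n : ℕ) : coeff (n + 1) (genSeries a) = a (n + 1) := by
  simp [genSeries, coeff_succ_X_mul]

theorem genSeries_eq_iff {a : ℕ → R} {f : R⟦X⟧} :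
    genSeries a = f ↔ constantCoeff f = 0 ∧ ∀ n, coeff (n + 1) f = a (n + 1) := by
  constructor
  · rintro rfl
    exact ⟨constantCoeff_genSeries a, coeff_succ_genSeries a⟩
  · rintro ⟨hzero, hsucc⟩
    ext n
    cases n with
    | zero => simp [constantCoeff_genSeries, hzero]
    | succ n => rw [coeff_succ_genSeries, hsucc]

end Semiring

variable [CommSemiring R]

theorem coeff_succ_genSeries_mul (a b : ℕ → R) (n : ℕ) :
    coeff (n + 1) (genSeries a * genSeries b) =
      ∑ k ∈ Finset.Ico 1 (n + 1), a k * b (n + 1 - k) := by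
  rw [genSeries, genSeries, mul_assoc, coeff_succ_X_mul, mul_left_comm]
  cases n with
  | zero => simp
  | succ n =>
    rw [coeff_succ_X_mul, coeff_mul, Finset.Nat.sum_antidiagonal_eq_sum_range_succ_mk,
      Finset.sum_Ico_eq_sum_range]
    refine Finset.sum_congr (by simp) fun k hk => ?_
    rw [Finset.mem_range] at hk
    simp only [coeff_mk]
    rw [add_comm 1 k, show n + 1 + 1 - (k + 1) = n - k + 1 by lia]

theorem X_smul_derivative_genSeries (a : ℕ → R) :
    ((X : R⟦X⟧) • d⁄dX R) (genSeries a) = genSeries fun n => n * a n := by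
  symm
  rw [genSeries_eq_iff]
  refine ⟨by simp, fun n => ?_⟩
  rw [Derivation.smul_apply, smul_eq_mul, coeff_succ_X_mul, coeff_derivative, coeff_succ_genSeries]
  push_cast
  ring

end GenSeries

section Pivot

variable {R : Type*}

/-- The sequence `Gt 1 i, gt 2 i, gt 3 i, …`. It absorbs the isolated `Gt 1` term of each recursion
into the sum, which then becomes a convolution. -/
def mixedSeq (gt Gt : ℕ → ℕ → R) (i M : ℕ) : R :=
  if M = 1 then Gt 1 i else gt M i

theorem sum_Ico_mixedSeq_mul [NonUnitalNonAssocSemiring R] (gt Gt : ℕ → ℕ → R) (i : ℕ)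
    (f : ℕ → R) {M : ℕ} (hM : 2 ≤ M) :
    ∑ k ∈ Finset.Ico 1 M, mixedSeq gt Gt i k * f (M - k) =
      Gt 1 i * f (M - 1) + ∑ k ∈ Finset.Icc 2 (M - 1), gt k i * f (M - k) := by
  have hIco : Finset.Ico 2 M = Finset.Icc 2 (M - 1) := by grind
  rw [Finset.sum_eq_sum_Ico_succ_bot (by lia), hIco]
  congr 1
  refine Finset.sum_congr rfl fun k hk => ?_
  rw [mixedSeq, if_neg (by grind)]

variable [Ring R]

/-- The `i`-th pivot of `BᵀB - X`, divided by the `i`-th pivot `q i` of `BᵀB`. -/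
noncomputable def pivot (gt Gt : ℕ → ℕ → R) (i : ℕ) : R⟦X⟧ :=
  1 - genSeries (mixedSeq gt Gt i)

theorem constantCoeff_pivot (gt Gt : ℕ → ℕ → R) (i : ℕ) : constantCoeff (pivot gt Gt i) = 1 := by
  simp [pivot, constantCoeff_genSeries]

theorem pivot_ne_zero [Nontrivial R] (gt Gt : ℕ → ℕ → R) (i : ℕ) : pivot gt Gt i ≠ 0 := by
  intro h0
  simpa [h0] using constantCoeff_pivot gt Gt i

end Pivot

section TraceRecursion

variable {K : Type*} [Field K]

/-- The recursion defining `g̃_{i+1}^{(M)}` and `G̃_{i+1}^{(M)}`, encoded as `gt M i` and `Gt M i`,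
from `q` and `e`: the position `i` is indexed from `0` and the order `M` from `1`. -/
structure IsTraceRecursion (N : ℕ) (q e : ℕ → K) (gt Gt : ℕ → ℕ → K) : Prop where
  gt_one_zero : gt 1 0 = 0
  Gt_one_zero : Gt 1 0 = 1 / q 0
  gt_one : ∀ i, 0 < i → i < N → gt 1 i = e (i - 1) / q i * Gt 1 (i - 1)
  Gt_one : ∀ i, 0 < i → i < N → Gt 1 i = gt 1 i + 1 / q i
  gt_zero : ∀ M, 2 ≤ M → gt M 0 = 0
  gt_eq : ∀ M, 2 ≤ M → ∀ i, 0 < i → i < N →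
    gt M i = e (i - 1) / q i * gt M (i - 1) + Gt 1 (i - 1) * gt (M - 1) i
      + ∑ k ∈ Finset.Icc 2 (M - 1), gt k (i - 1) * gt (M - k) i
  Gt_eq : ∀ M, 2 ≤ M → ∀ i, i < N →
    Gt M i = M * gt M i + Gt 1 i * Gt (M - 1) i
      + ∑ k ∈ Finset.Icc 2 (M - 1), gt k i * Gt (M - k) i

namespace IsTraceRecursion

variable {N : ℕ} {q e : ℕ → K} {gt Gt : ℕ → ℕ → K} (h : IsTraceRecursion N q e gt Gt) {i : ℕ}

include h

theorem genSeries_gt_zero : genSeries (fun M => gt M 0) = 0 := by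
  refine genSeries_eq_iff.2 ⟨map_zero _, fun n => ?_⟩
  cases n with
  | zero => simp [h.gt_one_zero]
  | succ n => simp [h.gt_zero (n + 1 + 1) (by lia)]

theorem pivot_eq (hi : i < N) :
    pivot gt Gt i = 1 - genSeries (fun M => gt M i) - C (1 / q i) * X := by
  have hGt : Gt 1 i = gt 1 i + 1 / q i := by
    rcases i.eq_zero_or_pos with rfl | hpos
    · rw [h.Gt_one_zero, h.gt_one_zero, zero_add]
    · exact h.Gt_one i hpos hi
  rw [pivot, sub_sub, sub_right_inj, genSeries_eq_iff]
  refine ⟨by simp [constantCoeff_genSeries], fun n => ?_⟩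
  cases n with
  | zero => simp [mixedSeq, hGt, coeff_succ_genSeries]
  | succ n => simp [mixedSeq, coeff_succ_genSeries]

theorem pivot_mul_genSeries_gt_succ (hi : i + 1 < N) :
    pivot gt Gt i * genSeries (fun M => gt M (i + 1)) =
      C (e i / q (i + 1)) * (1 - pivot gt Gt i) := by
  rw [pivot, sub_sub_cancel, sub_mul, one_mul, sub_eq_iff_eq_add, genSeries_eq_iff]
  refine ⟨by simp [constantCoeff_genSeries], fun n => ?_⟩
  rw [map_add, coeff_C_mul, coeff_succ_genSeries, coeff_succ_genSeries_mul]
  cases n with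
  | zero => simp [mixedSeq, h.gt_one (i + 1) i.succ_pos hi]
  | succ n =>
    rw [sum_Ico_mixedSeq_mul gt Gt i (fun M => gt M (i + 1)) (by lia), mixedSeq, if_neg (by lia),
      h.gt_eq (n + 1 + 1) (by lia) (i + 1) i.succ_pos hi, Nat.add_sub_cancel i]
    exact (add_assoc _ _ _).symm

theorem pivot_mul_genSeries_Gt (hi : i < N) :
    pivot gt Gt i * genSeries (fun M => Gt M i) = -((X : K⟦X⟧) • d⁄dX K) (pivot gt Gt i) := by
  rw [pivot, map_sub, Derivation.map_one_eq_zero, zero_sub, neg_neg, X_smul_derivative_genSeries,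
    sub_mul, one_mul, sub_eq_iff_eq_add, genSeries_eq_iff]
  refine ⟨by simp [constantCoeff_genSeries], fun n => ?_⟩
  rw [map_add, coeff_succ_genSeries, coeff_succ_genSeries_mul]
  cases n with
  | zero => simp [mixedSeq]
  | succ n =>
    rw [sum_Ico_mixedSeq_mul gt Gt i (fun M => Gt M i) (by lia), mixedSeq, if_neg (by lia),
      h.Gt_eq (n + 1 + 1) (by lia) i hi]
    exact (add_assoc _ _ _).symm

theorem pivot_zero (hN : 0 < N) (hq : q 0 ≠ 0) : C (q 0) * pivot gt Gt 0 = C (q 0) - X := by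
  have hC : C (q 0) * C (1 / q 0) = (1 : K⟦X⟧) := by
    rw [← map_mul, mul_one_div_cancel hq, map_one]
  rw [h.pivot_eq hN, h.genSeries_gt_zero]
  linear_combination -X * hC

theorem pivot_succ (hi : i + 1 < N) (hq : q (i + 1) ≠ 0) :
    C (q (i + 1)) * pivot gt Gt (i + 1) + C (e i) * (pivot gt Gt i)⁻¹ =
      C (q (i + 1)) + C (e i) - X := by
  have hinv : pivot gt Gt i * (pivot gt Gt i)⁻¹ = 1 :=
    PowerSeries.mul_inv_cancel _ (by simp [constantCoeff_pivot])
  have hC : C (q (i + 1)) * C (1 / q (i + 1)) = (1 : K⟦X⟧) := by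
    rw [← map_mul, mul_one_div_cancel hq, map_one]
  have hF : C (q (i + 1)) * C (e i / q (i + 1)) = (C (e i) : K⟦X⟧) := by
    rw [← map_mul, mul_div_cancel₀ _ hq]
  have hgt := h.pivot_mul_genSeries_gt_succ hi
  rw [h.pivot_eq hi]
  set p := pivot gt Gt i
  set g := genSeries fun M => gt M (i + 1)
  linear_combination (-C (q (i + 1)) * p⁻¹) * hgt - X * hC - (1 - p) * p⁻¹ * hF +
    (C (q (i + 1)) * g + C (e i)) * hinv

theorem det_one_sub_X_smul_inv {a b c d : ℕ → K} (hq : ∀ i < N, q i ≠ 0)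
    (hac : ∀ i < N, a i * c i = q i) (hbd : ∀ i, i + 1 < N → b i * d i = e i) :
    (1 - (X : K⟦X⟧) • ((upperBidiagonal N a b)ᵀ * upperBidiagonal N c d)⁻¹.map C).det =
      ∏ i ∈ Finset.range N, pivot gt Gt i := by
  have hdet : ((upperBidiagonal N a b)ᵀ * upperBidiagonal N c d).det ≠ 0 := by
    rw [det_transpose_mul_upperBidiagonal, Finset.prod_ne_zero_iff]
    exact fun i hi => hac i (Finset.mem_range.1 hi) ▸ hq i (Finset.mem_range.1 hi)
  have hCac (i : ℕ) (hi : i < N) : C (a i) * C (c i) = C (R := K) (q i) := by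
    rw [← map_mul, hac i hi]
  have hCbd (i : ℕ) (hi : i + 1 < N) : C (b i) * C (d i) = C (R := K) (e i) := by
    rw [← map_mul, hbd i hi]
  have hLR := transpose_mul_upperBidiagonal_sub_smul_one (N := N) (a := fun i => C (a i))
    (b := fun i => C (b i)) (c := fun i => C (c i)) (d := fun i => C (d i))
    (p := pivot gt Gt) (v := fun i => (pivot gt Gt i)⁻¹) (x := (X : K⟦X⟧))
    (fun i _ => PowerSeries.mul_inv_cancel _ (by simp [constantCoeff_pivot]))
    (fun hN => by rw [hCac 0 hN, h.pivot_zero hN (hq 0 hN)])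
    (fun i hi => by rw [hCac _ hi, hCbd i hi, h.pivot_succ hi (hq _ hi)])
  refine mul_left_cancel₀ ((map_ne_zero_iff (C (R := K)) C_injective).2 hdet) ?_
  rw [← det_map_C_sub_X_smul_one hdet.isUnit, Matrix.map_mul, transpose_map,
    upperBidiagonal_map_C, upperBidiagonal_map_C, hLR, det_transpose_mul_upperBidiagonal,
    det_transpose_mul_upperBidiagonal, map_prod, ← Finset.prod_mul_distrib]
  simp only [Pi.mul_apply, map_mul, mul_assoc]

end IsTraceRecursion

theorem stmt_8_general {N : ℕ} {q e a b c d : ℕ → K} {gt Gt : ℕ → ℕ → K}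
    (h : IsTraceRecursion N q e gt Gt) (hq : ∀ i < N, q i ≠ 0)
    (hac : ∀ i < N, a i * c i = q i) (hbd : ∀ i, i + 1 < N → b i * d i = e i) {M : ℕ}
    (hM : 1 ≤ M) :
    (((upperBidiagonal N a b)ᵀ * upperBidiagonal N c d)⁻¹ ^ M).trace =
      ∑ i ∈ Finset.range N, Gt M i := by
  set A := ((upperBidiagonal N a b)ᵀ * upperBidiagonal N c d)⁻¹
  set p := pivot gt Gt
  have hdet : (1 - (X : K⟦X⟧) • A.map C).det = ∏ i ∈ Finset.range N, p i :=
    h.det_one_sub_X_smul_inv hq hac hbd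
  have hpivot : ∏ i ∈ Finset.range N, p i ≠ 0 :=
    Finset.prod_ne_zero_iff.2 fun i _ => pivot_ne_zero gt Gt i
  have hlogDeriv : ((X : K⟦X⟧) • d⁄dX K) (∏ i ∈ Finset.range N, p i) =
      (∏ i ∈ Finset.range N, p i) * ∑ i ∈ Finset.range N, -genSeries fun M => Gt M i :=
    derivation_prod_of_eq_mul _ fun i hi => by
      rw [mul_neg, h.pivot_mul_genSeries_Gt (Finset.mem_range.1 hi), neg_neg]
  have hseries : genSeries (fun M => (A ^ M).trace) =
      ∑ i ∈ Finset.range N, genSeries fun M => Gt M i := by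
    refine mul_left_cancel₀ hpivot (neg_injective ?_)
    rw [← mul_neg _ (∑ i ∈ _, _), ← Finset.sum_neg_distrib, ← hlogDeriv, ← hdet,
      Derivation.smul_apply, derivative_det_one_sub_X_smul, genSeries, smul_eq_mul]
    ring
  obtain ⟨m, rfl⟩ := Nat.exists_eq_add_of_le' hM
  simpa only [map_sum, coeff_succ_genSeries] using congrArg (coeff (m + 1)) hseries

end TraceRecursion

end

/-- the new subtraction-free formula `J_M(B) = Σ_i G̃_i^{(M)}`, where
`J_M(B) = Tr((BᵀB)^{-M})`. Indices are 0-based: the paper's 1-based `g̃_i^{(M)}`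
is `gt M (i-1)`, `G̃_i^{(M)}` is `Gt M (i-1)`; `B̌_i = 1/q_i` is `1 / q (i-1)`;
`F̃_i = e_{i-1}/q_i` is `e (i-2) / q (i-1)`. -/
theorem stmt_8 (N : ℕ) (hN : 0 < N) (q e : ℕ → ℝ)
    (hq : ∀ i, i < N → 0 < q i) (he : ∀ i, i + 1 < N → 0 < e i)
    (B : Matrix (Fin N) (Fin N) ℝ)
    (hB : ∀ i j : Fin N, B i j =
      if (j : ℕ) = (i : ℕ) then Real.sqrt (q i)
      else if (j : ℕ) = (i : ℕ) + 1 then Real.sqrt (e i) else 0)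
    (gt Gt : ℕ → ℕ → ℝ)
    (hgt11 : gt 1 0 = 0)
    (hGt11 : Gt 1 0 = 1 / q 0)
    (hgt1i : ∀ i, 0 < i → i < N → gt 1 i = e (i - 1) / q i * Gt 1 (i - 1))
    (hGt1i : ∀ i, 0 < i → i < N → Gt 1 i = gt 1 i + 1 / q i)
    (hgtM1 : ∀ M, 2 ≤ M → gt M 0 = 0)
    (hgtMi : ∀ M, 2 ≤ M → ∀ i, 0 < i → i < N →
      gt M i = e (i - 1) / q i * gt M (i - 1) + Gt 1 (i - 1) * gt (M - 1) i
        + ∑ k ∈ Finset.Icc 2 (M - 1), gt k (i - 1) * gt (M - k) i)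
    (hGtM : ∀ M, 2 ≤ M → ∀ i, i < N →
      Gt M i = M * gt M i + Gt 1 i * Gt (M - 1) i
        + ∑ k ∈ Finset.Icc 2 (M - 1), gt k i * Gt (M - k) i) :
    ∀ M, 1 ≤ M →
      Matrix.trace ((Bᵀ * B)⁻¹ ^ M) = ∑ i ∈ Finset.range N, Gt M i := by
  obtain rfl : B = upperBidiagonal N (fun i => √(q i)) (fun i => √(e i)) := Matrix.ext hB
  exact fun M hM => stmt_8_general ⟨hgt11, hGt11, hgt1i, hGt1i, hgtM1, hgtMi, hGtM⟩
    (fun i hi => (hq i hi).ne') (fun i hi => Real.mul_self_sqrt (hq i hi).le)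
    (fun i hi => Real.mul_self_sqrt (he i hi).le) hM
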